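/- Let L : ℕ → ℝ be the sequence such that for every l ≥ 0, Σ_{k=2}^{N} Λ(k)(log k)^l / k − (log N)^{l+1}/(l+1) → L_l as N → ∞. Then for every integer n ≥ 1, λ_n = 1 − (n/2)(γ + log(4π)) − Σ_{l=1}^{n} C(n,l) ((−1)^{l−1}/(l−1)!) L_{l−1} + Σ_{j=2}^{n} (−1)^j C(n,j) (1 − 2^{−j}) ζ(j), where ζ(j) = Σ_{m≥1} m^{−j}; in particular λ_n is real. (The explicit arithmetic formula of Theorem 2.2 specialized to F = ζ, with m_ζ = 1, Q_ζ = π^{−1/2}, r = 1, λ_1 = 1/2, μ_1 = 0: the Bombieri–Lagarias formula.) -/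

import Mathlib

open Complex Finset Filter Topology

/-- The Riemann xi function `ξ(s) = s(s-1)π^{-s/2}Γ(s/2)ζ(s)`, written as the entire
function `s(s-1)Λ₀(s) + 1` where `Λ₀` is the completed Riemann zeta function. -/
noncomputable def riemannXi (s : ℂ) : ℂ := s * (s - 1) * completedRiemannZeta₀ s + 1

/-- The `n`-th Li coefficient `λ_n = (1/(n-1)!) dⁿ/dsⁿ [s^{n-1} log ξ(s)]` at `s = 1`. -/
noncomputable def liCoeff (n : ℕ) : ℂ :=
  (1 / ((n - 1).factorial : ℂ)) *
    iteratedDeriv n (fun s => s ^ (n - 1) * Complex.log (riemannXi s)) 1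


/-- Real digamma. -/
noncomputable def rdig (x : ℝ) : ℝ := deriv (Real.log ∘ Real.Gamma) x

lemma rdig_diff {x : ℝ} (hx : 0 < x) : DifferentiableAt ℝ (Real.log ∘ Real.Gamma) x := by
  refine ((Real.differentiableAt_Gamma ?_).log (Real.Gamma_ne_zero ?_)) <;>
    exact fun m ↦ ne_of_gt (by have : (0:ℝ) ≤ m := m.cast_nonneg; linarith)

lemma loggamma_rec (x : ℝ) (hx : 0 < x) : (Real.log ∘ Real.Gamma) (x + 1) =
    (Real.log ∘ Real.Gamma) x + Real.log x := by
  simp only [Function.comp_apply, Real.Gamma_add_one hx.ne',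
    Real.log_mul hx.ne' (Real.Gamma_pos_of_pos hx).ne', add_comm]

lemma rdig_rec (x : ℝ) (hx : 0 < x) : rdig (x + 1) = rdig x + 1 / x := by
  unfold rdig
  rw [← deriv_comp_add_const, one_div, ← Real.deriv_log,
      ← deriv_add (rdig_diff hx) (Real.differentiableAt_log hx.ne')]
  apply EventuallyEq.deriv_eq
  filter_upwards [eventually_gt_nhds hx] using loggamma_rec

lemma rdig_ub (x : ℝ) (hx : 0 < x) : rdig x ≤ Real.log x := by
  have hc : ConvexOn ℝ (Set.Ioi 0) (Real.log ∘ Real.Gamma) := Real.convexOn_log_Gamma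
  refine (hc.deriv_le_slope (Set.mem_Ioi.2 hx) (Set.mem_Ioi.2 (by linarith : 0 < x + 1))
        (by linarith) (rdig_diff hx)).trans (le_of_eq ?_)
  rw [slope_def_field, loggamma_rec x hx]; simp

lemma rdig_lb (x : ℝ) (hx : 0 < x) : Real.log x ≤ rdig (x + 1) := by
  have hc : ConvexOn ℝ (Set.Ioi 0) (Real.log ∘ Real.Gamma) := Real.convexOn_log_Gamma
  refine le_trans (le_of_eq ?_) (hc.slope_le_deriv (Set.mem_Ioi.2 hx)
    (Set.mem_Ioi.2 (by linarith : 0 < x + 1)) (by linarith) (rdig_diff (by linarith)))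
  rw [slope_def_field, loggamma_rec x hx]; simp

lemma rdig_sum (x : ℝ) (hx : 0 < x) (N : ℕ) :
    rdig (x + N) = rdig x + ∑ m ∈ range N, 1 / (x + m) := by
  induction N with
  | zero => simp
  | succ N ih =>
    rw [sum_range_succ, ← add_assoc, ← ih, Nat.cast_succ, ← add_assoc, rdig_rec _ (by positivity)]

lemma rdig_tendsto (x : ℝ) (hx : 0 < x) :
    Tendsto (fun N : ℕ => rdig (x + N) - Real.log (x + N)) atTop (𝓝 0) := by
  have h1 : Tendsto (fun N : ℕ => x + (N : ℝ)) atTop atTop :=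
    tendsto_atTop_add_const_left _ _ tendsto_natCast_atTop_atTop
  have h2 : Tendsto (fun N : ℕ => -(1 / (x + (N : ℝ)))) atTop (𝓝 0) := by
    simpa using (h1.inv_tendsto_atTop).neg
  refine tendsto_of_tendsto_of_tendsto_of_le_of_le h2 tendsto_const_nhds ?_ ?_
  · intro N
    have hp : 0 < x + (N : ℝ) := by positivity
    have := rdig_lb _ hp
    rw [rdig_rec _ hp] at this
    simp only; linarith
  · intro N
    have hp : 0 < x + (N : ℝ) := by positivity
    have := rdig_ub _ hp
    simp only; linarith

lemma log_diff_tendsto (x y : ℝ) (hx : 0 < x) (hy : 0 < y) :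
    Tendsto (fun N : ℕ => Real.log (x + N) - Real.log (y + N)) atTop (𝓝 0) := by
  have h1 : Tendsto (fun N : ℕ => y + (N : ℝ)) atTop atTop :=
    tendsto_atTop_add_const_left _ _ tendsto_natCast_atTop_atTop
  have h2 : Tendsto (fun N : ℕ => 1 + (x - y) * (y + (N : ℝ))⁻¹) atTop (𝓝 1) := by
    simpa using ((h1.inv_tendsto_atTop).const_mul (x - y)).const_add 1
  have h3 := h2.log one_ne_zero
  rw [Real.log_one] at h3
  refine h3.congr fun N => ?_
  have hp : 0 < x + (N : ℝ) := by positivity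
  have hq : 0 < y + (N : ℝ) := by positivity
  rw [← Real.log_div hp.ne' hq.ne']
  congr 1
  field_simp
  ring

lemma rdig_series (x y : ℝ) (hx : 0 < x) (hy : 0 < y) :
    Tendsto (fun N : ℕ => ∑ m ∈ range N, (1 / (y + m) - 1 / (x + m))) atTop
      (𝓝 (rdig x - rdig y)) := by
  have h := ((rdig_tendsto y hy).sub (rdig_tendsto x hx)).add (log_diff_tendsto y x hy hx)
  have h2 := h.const_add (rdig x - rdig y)
  simp only [sub_zero, add_zero] at h2
  refine h2.congr fun N => ?_
  rw [rdig_sum x hx, rdig_sum y hy, sum_sub_distrib]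
  ring

lemma digamma_eq_rdig (x : ℝ) (hx : 0 < x) : Complex.digamma (x : ℂ) = (rdig x : ℂ) := by
  have hne : ∀ m : ℕ, x ≠ -m := fun m ↦ ne_of_gt (by have : (0:ℝ) ≤ m := m.cast_nonneg; linarith)
  have hf : DifferentiableAt ℂ Complex.Gamma (x : ℂ) :=
    Complex.differentiableAt_Gamma _ (fun m => by exact_mod_cast hne m)
  have hg := (Real.differentiableAt_Gamma hne).hasDerivAt
  have h1 : deriv Complex.Gamma (x : ℂ) = ((deriv Real.Gamma x : ℝ) : ℂ) := by
    rw [← (funext Complex.Gamma_ofReal ▸ hf.hasDerivAt.comp_ofReal.deriv :)]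
    exact hg.ofReal_comp.deriv
  rw [Complex.digamma_def, logDeriv_apply, h1, Complex.Gamma_ofReal, rdig, Function.comp_def,
    deriv.log (Real.differentiableAt_Gamma hne) (Real.Gamma_ne_zero hne)]
  push_cast
  rfl

lemma odd_tsum (j : ℕ) (hj : 2 ≤ j) : ∑' m : ℕ, 1 / (2 * (m : ℝ) + 1) ^ j =
    (1 - (2 : ℝ) ^ (-(j : ℤ))) * ∑' m : ℕ, 1 / ((m : ℝ) + 1) ^ j := by
  have hs : Summable (fun m : ℕ => 1 / ((m : ℝ) + 1) ^ j) := by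
    have := (summable_nat_add_iff 1).2 (Real.summable_one_div_nat_pow.2 (by omega : 1 < j))
    simpa using this
  have he : Summable (fun m : ℕ => 1 / (((2 * m : ℕ) : ℝ) + 1) ^ j) :=
    hs.comp_injective (i := fun m : ℕ => 2 * m) (fun a b h => by simpa using h)
  have ho : Summable (fun m : ℕ => 1 / (((2 * m + 1 : ℕ) : ℝ) + 1) ^ j) :=
    hs.comp_injective (i := fun m : ℕ => 2 * m + 1) (fun a b h => by simpa using h)
  have h := tsum_even_add_odd (f := fun m : ℕ => 1 / ((m : ℝ) + 1) ^ j) he ho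
  have h2 : ∑' m : ℕ, 1 / (((2 * m + 1 : ℕ) : ℝ) + 1) ^ j =
      (2 : ℝ) ^ (-(j : ℤ)) * ∑' m : ℕ, 1 / ((m : ℝ) + 1) ^ j := by
    rw [← tsum_mul_left]
    refine tsum_congr fun m => ?_
    push_cast
    rw [show (2 * (m : ℝ) + 1 + 1) = 2 * (m + 1) by ring, mul_pow, zpow_neg, zpow_natCast,
      one_div, mul_inv, one_div]
  rw [h2] at h
  have h3 : ∑' m : ℕ, 1 / (2 * (m : ℝ) + 1) ^ j = ∑' m : ℕ, 1 / (((2 * m : ℕ) : ℝ) + 1) ^ j :=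
    tsum_congr fun m => by push_cast; rfl
  rw [h3, sub_mul, one_mul]
  exact eq_sub_of_add_eq h

lemma summable_odd (j : ℕ) (hj : 2 ≤ j) : Summable (fun m : ℕ => 1 / (2 * (m : ℝ) + 1) ^ j) := by
  have hs : Summable (fun m : ℕ => 1 / ((m : ℝ) + 1) ^ j) := by
    have := (summable_nat_add_iff 1).2 (Real.summable_one_div_nat_pow.2 (by omega : 1 < j))
    simpa using this
  have he : Summable (fun m : ℕ => 1 / (((2 * m : ℕ) : ℝ) + 1) ^ j) :=
    hs.comp_injective (i := fun m : ℕ => 2 * m) (fun a b h => by simpa using h)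
  simpa using he

/-- Coefficients of the digamma expansion. -/
noncomputable def dcoef (k : ℕ) : ℝ :=
  if k = 0 then 0 else (-1) ^ (k + 1) * ∑' m : ℕ, 1 / (2 * (m : ℝ) + 1) ^ (k + 1)

/-- The double series. -/
noncomputable def dterm (z : ℂ) (p : ℕ × ℕ) : ℂ :=
  (-1) ^ p.2 * z ^ (p.2 + 1) / (2 * (p.1 : ℂ) + 1) ^ (p.2 + 2)

lemma odd_ne (m : ℕ) : (2 * (m : ℂ) + 1) ≠ 0 := by
  have : ((2 * m + 1 : ℕ) : ℂ) ≠ 0 := Nat.cast_ne_zero.2 (Nat.succ_ne_zero (2 * m))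
  simpa using this

lemma norm_odd (m : ℕ) : ‖(2 * (m : ℂ) + 1)‖ = 2 * (m : ℝ) + 1 := by
  have : (2 * (m : ℂ) + 1) = ((2 * m + 1 : ℕ) : ℂ) := by push_cast; rfl
  rw [this, Complex.norm_natCast]; push_cast; rfl

lemma dterm_summable (z : ℂ) (hz : ‖z‖ < 1) : Summable (dterm z) := by
  have h1 : Summable (fun p : ℕ × ℕ => (1 / (2 * (p.1 : ℝ) + 1) ^ 2) * ‖z‖ ^ p.2) :=
    (summable_odd 2 le_rfl).mul_of_nonneg (summable_geometric_of_lt_one (norm_nonneg _) hz)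
      (fun m => by positivity) (fun m => by positivity)
  refine Summable.of_norm_bounded h1 ?_
  rintro ⟨m, k⟩
  simp only [dterm, norm_div, norm_mul, norm_pow, norm_neg, norm_one, one_pow, one_mul, norm_odd]
  rw [div_mul_eq_mul_div, one_mul, div_le_div_iff₀ (by positivity) (by positivity)]
  have h2 : ‖z‖ ^ (k + 1) ≤ ‖z‖ ^ k := pow_le_pow_of_le_one (norm_nonneg _) hz.le (by omega)
  have h3 : (2 * (m : ℝ) + 1) ^ 2 ≤ (2 * (m : ℝ) + 1) ^ (k + 2) :=
    pow_le_pow_right₀ (by have : (0:ℝ) ≤ m := m.cast_nonneg; linarith) (by omega)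
  gcongr

lemma dterm_fiber (z : ℂ) (hz : ‖z‖ < 1) (m : ℕ) :
    HasSum (fun k => dterm z (m, k)) (1 / (2 * (m : ℂ) + 1) - 1 / (2 * (m : ℂ) + 1 + z)) := by
  have ha := odd_ne m
  have hn : ‖-(z / (2 * (m : ℂ) + 1))‖ < 1 := by
    rw [norm_neg, norm_div, norm_odd, div_lt_one (by positivity)]
    have : (0:ℝ) ≤ m := m.cast_nonneg
    linarith
  have hb : 2 * (m : ℂ) + 1 + z ≠ 0 := by
    intro h
    have : -(z / (2 * (m : ℂ) + 1)) = 1 := by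
      field_simp; linear_combination -h
    rw [this] at hn; simp at hn
  have h := (hasSum_geometric_of_norm_lt_one hn).mul_left (z / (2 * (m : ℂ) + 1) ^ 2)
  have hb' : 1 - -(z / (2 * (m : ℂ) + 1)) ≠ 0 := by
    intro h; apply hb; field_simp at h; linear_combination h
  convert! h using 1
  · ext k
    simp only [dterm]
    rw [neg_pow (z / (2 * (m : ℂ) + 1)), div_pow]
    field_simp
    ring
  · have : 1 - -(z / (2 * (m : ℂ) + 1)) = (2 * (m : ℂ) + 1 + z) / (2 * (m : ℂ) + 1) := by
      field_simp; ring
    rw [this]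
    field_simp
    ring

lemma dterm_fiber' (z : ℂ) (k : ℕ) :
    HasSum (fun m => dterm z (m, k)) ((dcoef (k + 1) : ℂ) * z ^ (k + 1)) := by
  have h := (Complex.hasSum_ofReal.2 (summable_odd (k + 2) (by omega)).hasSum).mul_left
    ((-1 : ℂ) ^ k * z ^ (k + 1))
  convert! h using 1
  · ext m
    simp [dterm]; ring
  · simp [dcoef, pow_succ]; ring

lemma dseries (z : ℂ) (hz : ‖z‖ < 1) : HasSum (fun k => z ^ k * (dcoef k : ℂ))
    (∑' m : ℕ, (1 / (2 * (m : ℂ) + 1) - 1 / (2 * (m : ℂ) + 1 + z))) := by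
  have h := (dterm_summable z hz).hasSum
  have h1 := h.prod_fiberwise (dterm_fiber z hz)
  have h2 := (((Equiv.prodComm ℕ ℕ).hasSum_iff).2 h).prod_fiberwise (dterm_fiber' z)
  rw [h1.tsum_eq, ← hasSum_nat_add_iff' 1]
  simpa [dcoef, mul_comm] using h2

lemma dsummable (z : ℂ) (hz : ‖z‖ < 1) :
    Summable (fun m : ℕ => (1 / (2 * (m : ℂ) + 1) - 1 / (2 * (m : ℂ) + 1 + z))) :=
  ((dterm_summable z hz).hasSum.prod_fiberwise (dterm_fiber z hz)).summable

lemma digamma_tsum (x : ℝ) (hx : |x| < 1) :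
    (∑' m : ℕ, (1 / (2 * (m : ℂ) + 1) - 1 / (2 * (m : ℂ) + 1 + (x : ℂ)))) =
      (1 / 2) * Complex.digamma ((1 + (x : ℂ)) / 2) - (1 / 2) * Complex.digamma (1 / 2) := by
  have hx1 : 0 < (1 + x) / 2 := by have := (abs_lt.1 hx).1; linarith
  have h1 := (dsummable (x : ℂ) (by simpa using hx)).hasSum.tendsto_sum_nat
  refine tendsto_nhds_unique h1 ?_
  have h2 := rdig_series ((1 + x) / 2) (1 / 2) hx1 (by norm_num)
  have h3 := (Complex.continuous_ofReal.tendsto _).comp (h2.const_mul (1 / 2))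
  have e1 : (1 / 2) * Complex.digamma ((1 + (x : ℂ)) / 2) - (1 / 2) * Complex.digamma (1 / 2) =
      (((1 / 2) * (rdig ((1 + x) / 2) - rdig (1 / 2)) : ℝ) : ℂ) := by
    rw [mul_sub]
    push_cast
    rw [← digamma_eq_rdig _ hx1, ← digamma_eq_rdig _ (by norm_num)]
    push_cast
    rfl
  rw [e1]
  refine h3.congr fun N => ?_
  simp only [Function.comp]
  rw [mul_sum]
  push_cast
  refine sum_congr rfl fun m _ => ?_
  have hm : (0:ℝ) ≤ m := m.cast_nonneg
  have hA := odd_ne m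
  have hB : (2 * (m : ℂ) + 1 + (x : ℂ)) ≠ 0 := by
    have : (2 * (m : ℝ) + 1 + x) ≠ 0 := by linarith
    exact_mod_cast this
  have e2 : (1 / 2 + (m : ℂ)) = (2 * (m : ℂ) + 1) / 2 := by ring
  have e3 : ((1 + (x : ℂ)) / 2 + (m : ℂ)) = (2 * (m : ℂ) + 1 + x) / 2 := by ring
  rw [e2, e3]
  field_simp

lemma gammaR_analytic (s : ℂ) (hs : 0 < s.re) : AnalyticAt ℂ Complex.Gammaℝ s := by
  have ho : IsOpen {s : ℂ | 0 < s.re} := isOpen_lt continuous_const Complex.continuous_re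
  refine DifferentiableOn.analyticAt (s := {s : ℂ | 0 < s.re}) ?_ (ho.mem_nhds hs)
  intro z hz
  refine DifferentiableAt.differentiableWithinAt ?_
  have : Complex.Gammaℝ = fun s : ℂ => (Real.pi : ℂ) ^ (-s / 2) * Complex.Gamma (s / 2) := by
    ext s; rw [Complex.Gammaℝ_def]
  rw [this]
  refine DifferentiableAt.mul ?_ ?_
  · refine DifferentiableAt.const_cpow (by fun_prop) (Or.inl ?_)
    exact_mod_cast Real.pi_ne_zero
  · refine DifferentiableAt.comp z (g := Complex.Gamma) (Complex.differentiableAt_Gamma _ ?_) (by fun_prop)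
    intro m h
    have h1 := congrArg Complex.re h
    have hz' : 0 < z.re := hz
    have hm : (0:ℝ) ≤ m := m.cast_nonneg
    simp at h1
    linarith

lemma logDeriv_gammaR (s : ℂ) (hs : 0 < s.re) :
    logDeriv Complex.Gammaℝ s = -(Real.log Real.pi : ℂ) / 2 + (1 / 2) * Complex.digamma (s / 2) := by
  have hne : ∀ m : ℕ, s / 2 ≠ -m := by
    intro m h
    have h1 := congrArg Complex.re h
    have hm : (0:ℝ) ≤ m := m.cast_nonneg
    simp at h1
    linarith
  have hpi : (Real.pi : ℂ) ≠ 0 := by exact_mod_cast Real.pi_ne_zero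
  have e : Complex.Gammaℝ = fun s : ℂ => (Real.pi : ℂ) ^ (-s / 2) * Complex.Gamma (s / 2) := by
    ext s; rw [Complex.Gammaℝ_def]
  have hd1 : HasDerivAt (fun s : ℂ => (Real.pi : ℂ) ^ (-s / 2))
      ((Real.pi : ℂ) ^ (-s / 2) * Complex.log Real.pi * (-1 / 2)) s :=
    HasDerivAt.const_cpow (((hasDerivAt_id s).neg).div_const 2) (Or.inl hpi)
  have hd2 : HasDerivAt (fun s : ℂ => Complex.Gamma (s / 2))
      (deriv Complex.Gamma (s / 2) * (1 / 2)) s :=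
    HasDerivAt.comp s (Complex.differentiableAt_Gamma _ hne).hasDerivAt
      ((hasDerivAt_id s).div_const 2)
  have hp1 : (Real.pi : ℂ) ^ (-s / 2) ≠ 0 := by simp [Complex.cpow_eq_zero_iff, hpi]
  have hp2 := Complex.Gamma_ne_zero hne
  rw [e, logDeriv_mul s hp1 hp2 hd1.differentiableAt hd2.differentiableAt,
    logDeriv_apply, logDeriv_apply, hd1.deriv, hd2.deriv, Complex.digamma_def, logDeriv_apply,
    Complex.ofReal_log Real.pi_pos.le]
  field_simp

lemma logDeriv_gammaR_analytic (s : ℂ) (hs : 0 < s.re) :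
    AnalyticAt ℂ (logDeriv Complex.Gammaℝ) s := by
  have h := gammaR_analytic s hs
  exact h.deriv.div h (Complex.Gammaℝ_ne_zero_of_re_pos hs)

lemma iteratedDeriv_gammaR (k : ℕ) (hk : k ≠ 0) :
    iteratedDeriv k (logDeriv Complex.Gammaℝ) 1 = (k.factorial : ℂ) * (dcoef k : ℂ) := by
  set g : ℂ → ℂ := fun s => logDeriv Complex.Gammaℝ s - logDeriv Complex.Gammaℝ 1 with hg
  have hga : AnalyticAt ℂ g 1 := (logDeriv_gammaR_analytic 1 (by simp)).sub analyticAt_const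
  set K : ℂ → ℂ := fun s => ∑' m : ℕ, (1 / (2 * (m : ℂ) + 1) - 1 / (2 * (m : ℂ) + 1 + (s - 1)))
    with hK
  have hKp : HasFPowerSeriesAt K
      (FormalMultilinearSeries.ofScalars ℂ (fun k => (dcoef k : ℂ))) 1 := by
    rw [hasFPowerSeriesAt_iff]
    filter_upwards [Metric.ball_mem_nhds (0 : ℂ) one_pos] with z hz
    have := dseries z (by simpa using hz)
    simpa [hK, FormalMultilinearSeries.coeff_ofScalars, add_assoc] using this
  have hev : ∀ᶠ z in 𝓝 (1 : ℂ), K z = g z := by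
    rw [← hKp.analyticAt.frequently_eq_iff_eventually_eq hga]
    have ht : Tendsto (fun x : ℝ => (1 : ℂ) + x) (𝓝[≠] 0) (𝓝[≠] 1) := by
      refine tendsto_nhdsWithin_of_tendsto_nhds_of_eventually_within _ ?_ ?_
      · have : Continuous (fun x : ℝ => (1 : ℂ) + x) := by fun_prop
        simpa using (this.tendsto 0).mono_left nhdsWithin_le_nhds
      · filter_upwards [self_mem_nhdsWithin] with x hx
        simpa using hx
    refine ht.frequently (Eventually.frequently ?_)
    have hb : ∀ᶠ x : ℝ in 𝓝[≠] 0, |x| < 1 := by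
      filter_upwards [nhdsWithin_le_nhds (Metric.ball_mem_nhds (0 : ℝ) one_pos)] with x hx
      simpa using hx
    filter_upwards [hb] with x hx
    have h1 := (abs_lt.1 hx).1
    simp only [hK, hg, add_sub_cancel_left]
    rw [digamma_tsum x hx, logDeriv_gammaR _ (by simp; linarith), logDeriv_gammaR 1 (by simp)]
    ring
  have hgp := hKp.congr hev
  have h2 := hgp.eq_formalMultilinearSeries hga.hasFPowerSeriesAt
  have h3 := congrArg (fun p => FormalMultilinearSeries.coeff p k) h2
  simp only [FormalMultilinearSeries.coeff_ofScalars] at h3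
  have h4 : iteratedDeriv k g 1 = iteratedDeriv k (logDeriv Complex.Gammaℝ) 1 := by
    obtain ⟨k, rfl⟩ := Nat.exists_eq_succ_of_ne_zero hk
    rw [iteratedDeriv_succ', iteratedDeriv_succ']
    congr 1
    ext s
    simp [hg]
  rw [← h4, h3]
  have := Nat.factorial_ne_zero k
  field_simp

lemma logDeriv_gammaR_one : logDeriv Complex.Gammaℝ 1 =
    ((-(Real.eulerMascheroniConstant + Real.log (4 * Real.pi)) / 2 : ℝ) : ℂ) := by
  rw [logDeriv_apply, Complex.hasDerivAt_Gammaℝ_one.deriv, Complex.Gammaℝ_one, div_one]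
  push_cast
  rw [Complex.ofReal_log (by positivity)]
  push_cast
  rfl

lemma li_expand (f : ℂ → ℂ) (hf : AnalyticAt ℂ f 1) (n : ℕ) (hn : 1 ≤ n) :
    (1 / ((n - 1).factorial : ℂ)) * iteratedDeriv n (fun s => s ^ (n - 1) * f s) 1 =
      ∑ j ∈ Finset.Icc 1 n, (n.choose j : ℂ) / ((j - 1).factorial : ℂ) *
        iteratedDeriv (j - 1) (deriv f) 1 := by
  have hp : ContDiffAt ℂ n (fun s : ℂ => s ^ (n - 1)) 1 := by fun_prop
  rw [iteratedDeriv_fun_mul hp hf.contDiffAt, sum_range_succ]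
  have h0 : iteratedDeriv n (fun s : ℂ => s ^ (n - 1)) 1 = 0 := by
    rw [iteratedDeriv_pow, Nat.descFactorial_eq_zero_iff_lt.2 (by omega)]; simp
  rw [h0]
  simp only [mul_zero, zero_mul, add_zero]
  rw [mul_sum]
  refine sum_bij' (fun i _ => n - i) (fun j _ => n - j) ?_ ?_ ?_ ?_ ?_
  · intro i hi; simp at hi ⊢; omega
  · intro i hi; simp at hi ⊢; omega
  · intro i hi; simp at hi ⊢; omega
  · intro i hi; simp at hi ⊢; omega
  · intro i hi
    simp only [mem_range] at hi
    obtain ⟨q, rfl⟩ : ∃ q, n = i + q + 1 := ⟨n - i - 1, by omega⟩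
    have e1 : i + q + 1 - i = q + 1 := by omega
    have e2 : i + q + 1 - 1 = i + q := by omega
    rw [e1, e2, iteratedDeriv_pow, iteratedDeriv_succ']
    have h1 : ((i + q).descFactorial i : ℂ) * (q.factorial : ℂ) = ((i + q).factorial : ℂ) := by
      have := Nat.factorial_mul_descFactorial (show i ≤ i + q by omega)
      rw [Nat.add_sub_cancel_left] at this
      rw [← this]; push_cast; ring
    have h2 : (i + q + 1).choose (q + 1) = (i + q + 1).choose i := by
      rw [← Nat.choose_symm_of_eq_add (show i + q + 1 = i + (q + 1) by omega)]
    have h3 : (q.factorial : ℂ) ≠ 0 := by exact_mod_cast Nat.factorial_ne_zero _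
    have h4 : ((i + q).factorial : ℂ) ≠ 0 := by exact_mod_cast Nat.factorial_ne_zero _
    rw [h2, Nat.add_sub_cancel]
    simp only [one_pow, mul_one]
    rw [← h1] at h4 ⊢
    field_simp

section abel

variable (l : ℕ) (a : ℕ → ℝ)

/-- Error term in the summatory function. -/
noncomputable def errE (x : ℝ) : ℝ :=
  (∑ k ∈ Finset.Icc 1 ⌊x⌋₊, a k) - (Real.log x) ^ (l + 1) / (l + 1)

lemma errE_measurable : Measurable (errE l a) := by
  have h1 : Measurable (fun x : ℝ => ∑ k ∈ Finset.Icc 1 ⌊x⌋₊, a k) :=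
    (measurable_from_top (f := fun n : ℕ => ∑ k ∈ Finset.Icc 1 n, a k)).comp Nat.measurable_floor
  exact h1.sub ((Real.measurable_log.pow_const _).div_const _)

lemma logpow_floor : Tendsto (fun x : ℝ => (Real.log ⌊x⌋₊) ^ (l + 1) - (Real.log x) ^ (l + 1))
    atTop (𝓝 0) := by
  have h1 : Tendsto (fun x : ℝ => 2 * ((l : ℝ) + 1) * ((Real.log x) ^ l / x)) atTop (𝓝 0) := by
    have := (Real.isLittleO_pow_log_id_atTop (n := l)).tendsto_div_nhds_zero
    simpa using this.const_mul (2 * ((l : ℝ) + 1))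
  refine squeeze_zero_norm' ?_ h1
  filter_upwards [eventually_ge_atTop 2] with x hx
  have hf1 : x < ⌊x⌋₊ + 1 := Nat.lt_floor_add_one x
  have hf2 : (⌊x⌋₊ : ℝ) ≤ x := Nat.floor_le (by linarith)
  set y : ℝ := (⌊x⌋₊ : ℝ)
  have hy : 1 ≤ y := by linarith
  have hly : 0 ≤ Real.log y := Real.log_nonneg hy
  have hlx : Real.log y ≤ Real.log x := Real.log_le_log (by linarith) hf2
  have hd : Real.log x - Real.log y ≤ 2 / x := by
    rw [← Real.log_div (by linarith) (by linarith)]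
    have h3 := Real.log_le_sub_one_of_pos (show 0 < x / y by positivity)
    have h4 : x / y - 1 ≤ 1 / y := by
      rw [div_sub_one (by linarith)]
      gcongr; linarith
    have h5 : 1 / y ≤ 2 / x := by
      rw [div_le_div_iff₀ (by linarith) (by linarith)]; linarith
    linarith
  have h6 := abs_pow_sub_pow_le (Real.log y) (Real.log x) (l + 1)
  rw [Real.norm_eq_abs]
  refine h6.trans ?_
  rw [abs_of_nonneg hly, abs_of_nonneg (hly.trans hlx), max_eq_right hlx, abs_sub_comm,
    abs_of_nonneg (sub_nonneg.2 hlx)]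
  simp only [Nat.add_sub_cancel]
  push_cast
  have h7 : 0 ≤ Real.log x ^ l := pow_nonneg (hly.trans hlx) _
  calc (Real.log x - Real.log y) * ((l : ℝ) + 1) * Real.log x ^ l
      ≤ (2 / x) * ((l : ℝ) + 1) * Real.log x ^ l := by gcongr
    _ = _ := by ring

lemma errE_tendsto (L : ℝ)
    (h : Tendsto (fun N : ℕ => (∑ k ∈ Finset.Icc 1 N, a k) - (Real.log N) ^ (l + 1) / (l + 1))
      atTop (𝓝 L)) : Tendsto (errE l a) atTop (𝓝 L) := by
  have h1 := (h.comp (tendsto_nat_floor_atTop (α := ℝ))).add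
    ((logpow_floor l).div_const ((l : ℝ) + 1))
  simp only [zero_div, add_zero] at h1
  refine h1.congr fun x => ?_
  simp only [errE, Function.comp]
  ring

lemma errE_bound (ha : ∀ n, 0 ≤ a n) (L : ℝ) (h : Tendsto (errE l a) atTop (𝓝 L)) :
    ∃ C, ∀ x : ℝ, 1 ≤ x → |errE l a x| ≤ C := by
  have h1 : ∀ᶠ x in atTop, |errE l a x| < |L| + 1 := h.abs.eventually_lt_const (by linarith)
  obtain ⟨X, hX⟩ := eventually_atTop.1 h1
  refine ⟨max (|L| + 1) ((∑ k ∈ Finset.Icc 1 ⌊X⌋₊, a k) + (Real.log X) ^ (l + 1) / (l + 1)),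
    fun x hx => ?_⟩
  rcases le_total X x with hc | hc
  · exact (hX x hc).le.trans (le_max_left _ _)
  · refine le_trans ?_ (le_max_right _ _)
    have e1 : 0 ≤ ∑ k ∈ Finset.Icc 1 ⌊x⌋₊, a k := sum_nonneg fun _ _ => ha _
    have e2 : ∑ k ∈ Finset.Icc 1 ⌊x⌋₊, a k ≤ ∑ k ∈ Finset.Icc 1 ⌊X⌋₊, a k :=
      sum_le_sum_of_subset_of_nonneg (Finset.Icc_subset_Icc_right (Nat.floor_le_floor hc))
        fun _ _ _ => ha _
    have e3 : 0 ≤ Real.log x := Real.log_nonneg hx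
    have e4 : Real.log x ≤ Real.log X := Real.log_le_log (by linarith) hc
    have e5 : 0 ≤ (Real.log x) ^ (l + 1) / ((l : ℝ) + 1) := by positivity
    have e6 : (Real.log x) ^ (l + 1) / ((l : ℝ) + 1) ≤ (Real.log X) ^ (l + 1) / ((l : ℝ) + 1) := by
      gcongr
    rw [errE, abs_le]
    constructor <;> linarith

lemma sum_bigO (L : ℝ)
    (h : Tendsto (fun N : ℕ => (∑ k ∈ Finset.Icc 1 N, a k) - (Real.log N) ^ (l + 1) / (l + 1))
      atTop (𝓝 L)) (r : ℝ) (hr : 0 < r) :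
    (fun n : ℕ => ∑ k ∈ Finset.Icc 1 n, a k) =O[atTop] fun n : ℕ => (n : ℝ) ^ r := by
  have h1 : (fun x : ℝ => Real.log x ^ (l + 1)) =o[atTop] fun x : ℝ => x ^ r := by
    have := isLittleO_log_rpow_rpow_atTop ((l + 1 : ℕ) : ℝ) hr
    simpa only [Real.rpow_natCast] using this
  have h2 : (fun n : ℕ => Real.log n ^ (l + 1)) =O[atTop] fun n : ℕ => (n : ℝ) ^ r :=
    (h1.comp_tendsto tendsto_natCast_atTop_atTop).isBigO
  have h3 : (fun _ : ℕ => (1 : ℝ)) =O[atTop] fun n : ℕ => (n : ℝ) ^ r := by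
    refine Asymptotics.IsBigO.of_bound 1 ?_
    filter_upwards [eventually_ge_atTop 1] with n hn
    have : 1 ≤ (n : ℝ) ^ r := Real.one_le_rpow (by exact_mod_cast hn) hr.le
    rw [norm_one, one_mul, Real.norm_eq_abs]
    exact this.trans (le_abs_self _)
  have h4 := (h.isBigO_one ℝ).trans h3
  refine (h4.add (h2.const_mul_left (1 / ((l : ℝ) + 1)))).congr_left fun n => ?_
  ring

open MeasureTheory

lemma gamma_int (m : ℕ) : IntegrableOn (fun t : ℝ => t ^ m * Real.exp (-t)) (Set.Ioi 0) ∧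
    ∫ t in Set.Ioi (0 : ℝ), t ^ m * Real.exp (-t) = (m.factorial : ℝ) := by
  have hp : (0 : ℝ) < (m : ℝ) + 1 := by positivity
  have h1 := Real.GammaIntegral_convergent hp
  have h2 := Real.Gamma_eq_integral hp
  have e : (fun x : ℝ => Real.exp (-x) * x ^ ((m : ℝ) + 1 - 1)) =
      fun t : ℝ => t ^ m * Real.exp (-t) := by
    ext t; rw [add_sub_cancel_right, Real.rpow_natCast, mul_comm]
  rw [e] at h1 h2
  exact ⟨h1, by rw [← h2, Real.Gamma_nat_eq_factorial]⟩

lemma subst_exp (σ : ℝ) (hσ : 0 < σ) (S : ℝ → ℝ) :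
    σ * ∫ x in Set.Ioi (1 : ℝ), S x * x ^ (-(σ + 1)) =
      ∫ t in Set.Ioi (0 : ℝ), S (Real.exp (t / σ)) * Real.exp (-t) := by
  have himg : (fun t : ℝ => Real.exp (t / σ)) '' Set.Ioi 0 = Set.Ioi 1 := by
    ext x
    simp only [Set.mem_image, Set.mem_Ioi]
    constructor
    · rintro ⟨t, ht, rfl⟩
      exact Real.one_lt_exp_iff.2 (by positivity)
    · intro hx
      refine ⟨σ * Real.log x, mul_pos hσ (Real.log_pos hx), ?_⟩
      rw [mul_div_cancel_left₀ _ hσ.ne', Real.exp_log (by linarith)]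
  have hder : ∀ t ∈ Set.Ioi (0 : ℝ), HasDerivWithinAt (fun t : ℝ => Real.exp (t / σ))
      (Real.exp (t / σ) * (1 / σ)) (Set.Ioi 0) t := fun t _ =>
    (((hasDerivAt_id t).div_const σ).exp).hasDerivWithinAt
  have hinj : Set.InjOn (fun t : ℝ => Real.exp (t / σ)) (Set.Ioi 0) := by
    intro x _ y _ hxy
    have := Real.exp_injective hxy
    field_simp at this
    exact this
  rw [← himg, integral_image_eq_integral_abs_deriv_smul measurableSet_Ioi hder hinj,
    ← integral_const_mul]
  refine setIntegral_congr_fun measurableSet_Ioi fun t _ => ?_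
  simp only [smul_eq_mul]
  rw [abs_of_pos (by positivity), ← Real.exp_mul]
  have : Real.exp (-t) = Real.exp (t / σ) * Real.exp (t / σ * -(σ + 1)) := by
    rw [← Real.exp_add]; congr 1; field_simp; ring
  rw [this]
  field_simp

lemma lseries_real (ha : ∀ n, 0 ≤ a n) (L : ℝ)
    (h : Tendsto (fun N : ℕ => (∑ k ∈ Finset.Icc 1 N, a k) - (Real.log N) ^ (l + 1) / (l + 1))
      atTop (𝓝 L)) (σ : ℝ) (hσ : 0 < σ) :
    LSeries (fun n => (a n : ℂ)) (σ : ℂ) - (l.factorial : ℂ) / (σ : ℂ) ^ (l + 1) =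
      ((∫ t in Set.Ioi (0 : ℝ), errE l a (Real.exp (t / σ)) * Real.exp (-t) : ℝ) : ℂ) := by
  obtain ⟨C, hC⟩ := errE_bound l a ha L (errE_tendsto l a L h)
  have hI1 : IntegrableOn (fun t => errE l a (Real.exp (t / σ)) * Real.exp (-t)) (Set.Ioi 0) := by
    have hg := (gamma_int 0).1.const_mul C
    refine Integrable.mono' hg ?_ ?_
    · refine Measurable.aestronglyMeasurable ?_
      exact ((errE_measurable l a).comp (by fun_prop)).mul (by fun_prop)
    · refine (ae_restrict_iff' measurableSet_Ioi).2 (Eventually.of_forall fun t ht => ?_)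
      have ht' : (0 : ℝ) < t := ht
      rw [norm_mul, Real.norm_eq_abs, Real.norm_eq_abs, abs_of_pos (Real.exp_pos _), pow_zero,
        one_mul]
      gcongr
      exact hC _ (Real.one_le_exp (by positivity))
  have hI2 : IntegrableOn (fun t => (1 / (((l : ℝ) + 1) * σ ^ (l + 1))) *
      (t ^ (l + 1) * Real.exp (-t))) (Set.Ioi 0) := (gamma_int (l + 1)).1.const_mul _
  have h1 := LSeries_eq_mul_integral_of_nonneg a (r := σ / 2) (by positivity) (s := (σ : ℂ))
    (by simp; linarith) (sum_bigO l a L h _ (by positivity)) ha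
  have h2 : ∫ t in Set.Ioi (1 : ℝ), (∑ k ∈ Finset.Icc 1 ⌊t⌋₊, (a k : ℂ)) * (t : ℂ) ^ (-((σ : ℂ) + 1))
      = ((∫ t in Set.Ioi (1 : ℝ), (∑ k ∈ Finset.Icc 1 ⌊t⌋₊, a k) * t ^ (-(σ + 1)) : ℝ) : ℂ) := by
    rw [← integral_complex_ofReal]
    refine setIntegral_congr_fun measurableSet_Ioi fun t ht => ?_
    have ht' : (1 : ℝ) < t := ht
    push_cast
    rw [Complex.ofReal_cpow (by linarith)]
    push_cast
    rfl
  rw [h1, h2, ← Complex.ofReal_mul, subst_exp σ hσ (fun x => ∑ k ∈ Finset.Icc 1 ⌊x⌋₊, a k)]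
  have h3 : ∫ t in Set.Ioi (0 : ℝ), (∑ k ∈ Finset.Icc 1 ⌊Real.exp (t / σ)⌋₊, a k) * Real.exp (-t)
      = (∫ t in Set.Ioi (0 : ℝ), errE l a (Real.exp (t / σ)) * Real.exp (-t)) +
        l.factorial / σ ^ (l + 1) := by
    have e : (l.factorial : ℝ) / σ ^ (l + 1) = ∫ t in Set.Ioi (0 : ℝ),
        (1 / (((l : ℝ) + 1) * σ ^ (l + 1))) * (t ^ (l + 1) * Real.exp (-t)) := by
      rw [integral_const_mul, (gamma_int (l + 1)).2, Nat.factorial_succ]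
      push_cast
      field_simp
    rw [e, ← integral_add hI1 hI2]
    refine setIntegral_congr_fun measurableSet_Ioi fun t ht => ?_
    simp only [errE, Real.log_exp]
    rw [div_pow]
    field_simp
    ring
  rw [h3]
  push_cast
  ring

lemma abel_tendsto (ha : ∀ n, 0 ≤ a n) (L : ℝ)
    (h : Tendsto (fun N : ℕ => (∑ k ∈ Finset.Icc 1 N, a k) - (Real.log N) ^ (l + 1) / (l + 1))
      atTop (𝓝 L)) :
    Tendsto (fun σ : ℝ => LSeries (fun n => (a n : ℂ)) (σ : ℂ) -
      (l.factorial : ℂ) / (σ : ℂ) ^ (l + 1)) (𝓝[>] 0) (𝓝 (L : ℂ)) := by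
  obtain ⟨C, hC⟩ := errE_bound l a ha L (errE_tendsto l a L h)
  have hlim : Tendsto (fun σ : ℝ => ∫ t in Set.Ioi (0 : ℝ),
      errE l a (Real.exp (t / σ)) * Real.exp (-t)) (𝓝[>] 0)
      (𝓝 (∫ t in Set.Ioi (0 : ℝ), L * Real.exp (-t))) := by
    refine tendsto_integral_filter_of_dominated_convergence (fun t => C * Real.exp (-t)) ?_ ?_ ?_ ?_
    · refine Eventually.of_forall fun σ => Measurable.aestronglyMeasurable ?_
      exact ((errE_measurable l a).comp (by fun_prop)).mul (by fun_prop)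
    · filter_upwards [self_mem_nhdsWithin] with σ hσ
      have hσ' : (0 : ℝ) < σ := hσ
      refine (ae_restrict_iff' measurableSet_Ioi).2 (Eventually.of_forall fun t ht => ?_)
      have ht' : (0 : ℝ) < t := ht
      rw [norm_mul, Real.norm_eq_abs, Real.norm_eq_abs, abs_of_pos (Real.exp_pos _)]
      gcongr
      exact hC _ (Real.one_le_exp (by positivity))
    · simpa using (gamma_int 0).1.const_mul C
    · refine (ae_restrict_iff' measurableSet_Ioi).2 (Eventually.of_forall fun t ht => ?_)
      have ht' : (0 : ℝ) < t := ht
      have hdiv : Tendsto (fun σ : ℝ => t / σ) (𝓝[>] 0) atTop := by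
        simp only [div_eq_mul_inv]
        exact (tendsto_inv_nhdsGT_zero).const_mul_atTop ht'
      exact Tendsto.mul_const _ ((errE_tendsto l a L h).comp (Real.tendsto_exp_atTop.comp hdiv))
  have hL : ∫ t in Set.Ioi (0 : ℝ), L * Real.exp (-t) = L := by
    rw [integral_const_mul]
    have := (gamma_int 0).2
    simp only [pow_zero, one_mul, Nat.factorial_zero, Nat.cast_one] at this
    rw [this, mul_one]
  rw [hL] at hlim
  refine ((Complex.continuous_ofReal.tendsto _).comp hlim).congr' ?_
  filter_upwards [self_mem_nhdsWithin] with σ hσ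
  rw [lseries_real l a ha L h σ hσ]
  rfl

end abel

lemma logMul_iter (l : ℕ) (f : ℕ → ℂ) (n : ℕ) :
    (LSeries.logMul^[l] f) n = (Complex.log n) ^ l * f n := by
  induction l generalizing f with
  | zero => simp
  | succ l ih =>
    rw [Function.iterate_succ, Function.comp, ih, LSeries.logMul]
    ring

lemma lseries_shift (l : ℕ) (σ : ℝ) :
    LSeries (fun n => ((ArithmeticFunction.vonMangoldt n * (Real.log n) ^ l / n : ℝ) : ℂ)) (σ : ℂ) =
    LSeries (LSeries.logMul^[l] (fun n => ((ArithmeticFunction.vonMangoldt n : ℝ) : ℂ)))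
      (1 + (σ : ℂ)) := by
  unfold LSeries
  refine tsum_congr fun n => ?_
  rcases eq_or_ne n 0 with rfl | hn
  · simp
  · rw [LSeries.term_of_ne_zero hn, LSeries.term_of_ne_zero hn, logMul_iter]
    have hn' : (n : ℂ) ≠ 0 := by exact_mod_cast hn
    rw [Complex.cpow_add _ _ hn', Complex.cpow_one]
    push_cast
    rw [div_div]
    ring

/-- Auxiliary function: `1/s` plus the log derivative of `Gammaℝ` minus that of `ξ`. -/
noncomputable def auxH (s : ℂ) : ℂ := s⁻¹ + logDeriv Complex.Gammaℝ s - logDeriv riemannXi s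

lemma xi_differentiable : Differentiable ℂ riemannXi := by
  unfold riemannXi
  have := differentiable_completedZeta₀
  fun_prop

lemma xi_analytic (s : ℂ) : AnalyticAt ℂ riemannXi s := xi_differentiable.analyticAt s

lemma xi_one : riemannXi 1 = 1 := by simp [riemannXi]

lemma xi_eq (s : ℂ) (hs : 1 < s.re) :
    riemannXi s = s * ((s - 1) * (Complex.Gammaℝ s * riemannZeta s)) := by
  have h0 : s ≠ 0 := by rintro rfl; simp at hs; linarith
  have h1 : s - 1 ≠ 0 := by intro h; rw [sub_eq_zero] at h; subst h; simp at hs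
  have h1' : 1 - s ≠ 0 := by intro h; apply h1; linear_combination -h
  have hG := Complex.Gammaℝ_ne_zero_of_re_pos (show 0 < s.re by linarith)
  rw [riemannZeta_def_of_ne_zero h0, mul_div_cancel₀ _ hG, completedRiemannZeta_eq, riemannXi]
  field_simp
  ring

lemma auxH_analytic : AnalyticAt ℂ auxH 1 := by
  unfold auxH
  refine ((analyticAt_id.inv one_ne_zero).add (logDeriv_gammaR_analytic 1 (by simp))).sub ?_
  exact (xi_analytic 1).deriv.div (xi_analytic 1) (by simp [xi_one])

lemma auxH_eq (s : ℂ) (hs : 1 < s.re) : auxH s =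
    LSeries (fun n => ((ArithmeticFunction.vonMangoldt n : ℝ) : ℂ)) s - (s - 1)⁻¹ := by
  have ho : IsOpen {s : ℂ | 1 < s.re} := isOpen_lt continuous_const Complex.continuous_re
  have h0 : s ≠ 0 := by rintro rfl; simp at hs; linarith
  have hs1 : s ≠ 1 := by rintro rfl; simp at hs
  have h1 : s - 1 ≠ 0 := sub_ne_zero.2 hs1
  have hG := Complex.Gammaℝ_ne_zero_of_re_pos (show 0 < s.re by linarith)
  have hGd := (gammaR_analytic s (by linarith)).differentiableAt
  have hZ := riemannZeta_ne_zero_of_one_le_re hs.le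
  have hZd := differentiableAt_riemannZeta hs1
  have hev : riemannXi =ᶠ[𝓝 s]
      fun s => s * ((s - 1) * (Complex.Gammaℝ s * riemannZeta s)) := by
    filter_upwards [ho.mem_nhds hs] with z hz using xi_eq z hz
  have e1 : logDeriv riemannXi s =
      logDeriv (fun s => s * ((s - 1) * (Complex.Gammaℝ s * riemannZeta s))) s := by
    rw [logDeriv_apply, logDeriv_apply, hev.deriv_eq, hev.eq_of_nhds]
  have e2 : logDeriv (fun s : ℂ => s * ((s - 1) * (Complex.Gammaℝ s * riemannZeta s))) s =
      s⁻¹ + ((s - 1)⁻¹ + (logDeriv Complex.Gammaℝ s + logDeriv riemannZeta s)) := by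
    have hd1 : DifferentiableAt ℂ (fun s : ℂ => s - 1) s := by fun_prop
    have m1 := logDeriv_mul (f := fun s : ℂ => s)
      (g := fun s : ℂ => (s - 1) * (Complex.Gammaℝ s * riemannZeta s)) s h0
      (mul_ne_zero h1 (mul_ne_zero hG hZ)) differentiableAt_fun_id (hd1.mul (hGd.mul hZd))
    have m2 := logDeriv_mul (f := fun s : ℂ => s - 1)
      (g := fun s : ℂ => Complex.Gammaℝ s * riemannZeta s) s h1
      (mul_ne_zero hG hZ) hd1 (hGd.mul hZd)
    have m3 := logDeriv_mul (f := Complex.Gammaℝ) (g := riemannZeta) s hG hZ hGd hZd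
    rw [m1, m2, m3]
    simp [logDeriv_apply]
  rw [ArithmeticFunction.LSeries_vonMangoldt_eq_deriv_riemannZeta_div hs, auxH, e1, e2,
    logDeriv_apply riemannZeta]
  ring

lemma iteratedDeriv_inv_at (k : ℕ) (s : ℂ) :
    iteratedDeriv k (fun z : ℂ => z⁻¹) s = (-1) ^ k * k.factorial * s ^ (-1 - (k : ℤ)) := by
  rw [iteratedDeriv_eq_iterate]
  exact iter_deriv_inv k s

lemma auxH_iter (l : ℕ) (σ : ℝ) (hσ : 0 < σ) :
    iteratedDeriv l auxH (1 + (σ : ℂ)) = (-1) ^ l *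
      (LSeries (fun n => ((ArithmeticFunction.vonMangoldt n * (Real.log n) ^ l / n : ℝ) : ℂ)) (σ : ℂ)
        - (l.factorial : ℂ) / (σ : ℂ) ^ (l + 1)) := by
  have ho : IsOpen {s : ℂ | 1 < s.re} := isOpen_lt continuous_const Complex.continuous_re
  have hs : 1 < (1 + (σ : ℂ)).re := by simpa using hσ
  have hev : auxH =ᶠ[𝓝 (1 + (σ : ℂ))] (fun s =>
    LSeries (fun n => ((ArithmeticFunction.vonMangoldt n : ℝ) : ℂ)) s - (s - 1)⁻¹) := by
    filter_upwards [ho.mem_nhds hs] with z hz using auxH_eq z hz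
  have habs : LSeries.abscissaOfAbsConv
      (fun n => ((ArithmeticFunction.vonMangoldt n : ℝ) : ℂ)) < ((1 + (σ : ℂ)).re : ℝ) := by
    refine lt_of_le_of_lt (LSeries.abscissaOfAbsConv_le_of_forall_lt_LSeriesSummable (x := 1)
      fun y hy => ArithmeticFunction.LSeriesSummable_vonMangoldt (by simpa using hy)) ?_
    exact_mod_cast hs
  have hσ' : (σ : ℂ) ≠ 0 := by exact_mod_cast hσ.ne'
  have hA : AnalyticAt ℂ (LSeries (fun n => ((ArithmeticFunction.vonMangoldt n : ℝ) : ℂ)))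
      (1 + (σ : ℂ)) := LSeries_analyticOnNhd _ _ habs
  have hB : AnalyticAt ℂ (fun s : ℂ => (s - 1)⁻¹) (1 + (σ : ℂ)) :=
    AnalyticAt.inv (by fun_prop) (by simpa using hσ')
  rw [hev.iteratedDeriv_eq, iteratedDeriv_fun_sub hA.contDiffAt hB.contDiffAt,
    LSeries_iteratedDeriv l habs, lseries_shift]
  have h2 : iteratedDeriv l (fun s : ℂ => (s - 1)⁻¹) (1 + (σ : ℂ)) =
      (-1) ^ l * ((l.factorial : ℂ) / (σ : ℂ) ^ (l + 1)) := by
    have := congrFun (iteratedDeriv_comp_sub_const l (fun z : ℂ => z⁻¹) 1) (1 + (σ : ℂ))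
    rw [this, iteratedDeriv_inv_at, add_sub_cancel_left,
      show (-1 - (l : ℤ)) = -((l + 1 : ℕ) : ℤ) by push_cast; ring, zpow_neg, zpow_natCast]
    ring
  rw [h2]
  ring

lemma auxH_iter_one (l : ℕ) (L : ℝ)
    (hL : Filter.Tendsto
      (fun N : ℕ => (∑ k ∈ Finset.Icc 2 N,
          ArithmeticFunction.vonMangoldt k * (Real.log k) ^ l / k) -
        (Real.log N) ^ (l + 1) / (l + 1)) Filter.atTop (𝓝 L)) :
    iteratedDeriv l auxH 1 = (-1) ^ l * (L : ℂ) := by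
  set a : ℕ → ℝ := fun k => ArithmeticFunction.vonMangoldt k * (Real.log k) ^ l / k with ha
  have hnn : ∀ n, 0 ≤ a n := fun n => by
    have h1 : 0 ≤ Real.log n := Real.log_natCast_nonneg n
    have h2 : 0 ≤ ArithmeticFunction.vonMangoldt n := ArithmeticFunction.vonMangoldt_nonneg
    simp only [ha]; positivity
  have hL' : Tendsto (fun N : ℕ => (∑ k ∈ Finset.Icc 1 N, a k) -
      (Real.log N) ^ (l + 1) / (l + 1)) atTop (𝓝 L) := by
    refine hL.congr' ?_
    filter_upwards [eventually_ge_atTop 1] with N hN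
    rw [← Finset.insert_Icc_add_one_left_eq_Icc hN, sum_insert (by simp)]
    simp [ha]
  have h1 := (abel_tendsto l a hnn L hL').const_mul ((-1 : ℂ) ^ l)
  have h2 : Tendsto (fun σ : ℝ => iteratedDeriv l auxH (1 + (σ : ℂ))) (𝓝[>] 0)
      (𝓝 (iteratedDeriv l auxH 1)) := by
    have hc : ContinuousAt (iteratedDeriv l auxH) 1 := by
      rw [iteratedDeriv_eq_iterate]
      exact (auxH_analytic.iterated_deriv l).continuousAt
    have ht : Tendsto (fun x : ℝ => (1 : ℂ) + x) (𝓝[>] 0) (𝓝 1) := by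
      have : Continuous (fun x : ℝ => (1 : ℂ) + x) := by fun_prop
      simpa using (this.tendsto 0).mono_left nhdsWithin_le_nhds
    exact hc.tendsto.comp ht
  refine tendsto_nhds_unique h2 (h1.congr' ?_)
  filter_upwards [self_mem_nhdsWithin] with σ hσ
  rw [auxH_iter l σ hσ]

lemma iter_logDeriv_xi (k : ℕ) : iteratedDeriv k (logDeriv riemannXi) 1 =
    (-1) ^ k * (k.factorial : ℂ) + iteratedDeriv k (logDeriv Complex.Gammaℝ) 1 -
      iteratedDeriv k auxH 1 := by
  have h1 : logDeriv riemannXi = fun s => (s⁻¹ + logDeriv Complex.Gammaℝ s) - auxH s := by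
    ext s; simp [auxH]
  have hi : AnalyticAt ℂ (fun s : ℂ => s⁻¹) 1 := analyticAt_id.inv one_ne_zero
  have hg := logDeriv_gammaR_analytic 1 (by simp)
  have hig : AnalyticAt ℂ (fun s : ℂ => s⁻¹ + logDeriv Complex.Gammaℝ s) 1 := hi.add hg
  rw [h1, iteratedDeriv_fun_sub hig.contDiffAt auxH_analytic.contDiffAt,
    iteratedDeriv_fun_add hi.contDiffAt hg.contDiffAt, iteratedDeriv_inv_at]
  simp

lemma choose_alt (n : ℕ) (hn : 1 ≤ n) :
    ∑ j ∈ Finset.Icc 1 n, (n.choose j : ℝ) * (-1) ^ (j - 1) = 1 := by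
  have h := Int.alternating_sum_range_choose (n := n)
  rw [if_neg (by omega), sum_range_succ'] at h
  have h' : (∑ k ∈ range n, (-1 : ℝ) ^ (k + 1) * (n.choose (k + 1) : ℝ)) + 1 = 0 := by
    have := congrArg (fun z : ℤ => (z : ℝ)) h
    simpa using this
  rw [Finset.range_eq_Ico] at h'
  rw [show Finset.Icc 1 n = Finset.Ico (0 + 1) (n + 1) by ext; simp,
    ← Finset.sum_Ico_add' (fun j => (n.choose j : ℝ) * (-1) ^ (j - 1)) 0 n 1]
  have : ∑ x ∈ Ico 0 n, (n.choose (x + 1) : ℝ) * (-1) ^ (x + 1 - 1) =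
      - ∑ k ∈ Ico 0 n, (-1 : ℝ) ^ (k + 1) * (n.choose (k + 1) : ℝ) := by
    rw [← sum_neg_distrib]
    refine sum_congr rfl fun k _ => ?_
    rw [Nat.add_sub_cancel]; ring
  rw [this]; linarith

/-- **The Bombieri–Lagarias arithmetic formula** (Theorem 2.2 for `F = ζ`): if `L_l` is the
limit of `∑_{k=2}^N Λ(k)(log k)^l / k − (log N)^{l+1}/(l+1)` as `N → ∞`, then for `n ≥ 1`,
`λ_n = 1 − (n/2)(γ + log(4π)) − ∑_{l=1}^n C(n,l)((−1)^{l−1}/(l−1)!) L_{l−1}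
  + ∑_{j=2}^n (−1)^j C(n,j)(1 − 2^{−j}) ζ(j)`; in particular `λ_n` is real. -/
theorem li_coeff_arithmetic_formula (L : ℕ → ℝ)
    (hL : ∀ l : ℕ, Filter.Tendsto
      (fun N : ℕ => (∑ k ∈ Finset.Icc 2 N,
          ArithmeticFunction.vonMangoldt k * (Real.log k) ^ l / k) -
        (Real.log N) ^ (l + 1) / (l + 1))
      Filter.atTop (𝓝 (L l))) :
    ∀ n : ℕ, 1 ≤ n →
      liCoeff n = ((1 - ((n : ℝ) / 2) *
          (Real.eulerMascheroniConstant + Real.log (4 * Real.pi)) -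
        (∑ l ∈ Finset.Icc 1 n, (n.choose l : ℝ) *
          ((-1 : ℝ) ^ (l - 1) / ((l - 1).factorial : ℝ)) * L (l - 1)) +
        (∑ j ∈ Finset.Icc 2 n, (-1 : ℝ) ^ j * (n.choose j : ℝ) *
          (1 - (2 : ℝ) ^ (-(j : ℤ))) * (∑' m : ℕ, 1 / ((m : ℝ) + 1) ^ j)) : ℝ) : ℂ) := by
  intro n hn
  have hslit : riemannXi 1 ∈ Complex.slitPlane := by rw [xi_one]; exact Complex.one_mem_slitPlane
  have hfa : AnalyticAt ℂ (fun s => Complex.log (riemannXi s)) 1 := (xi_analytic 1).clog hslit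
  have hder : deriv (fun s => Complex.log (riemannXi s)) =ᶠ[𝓝 1] logDeriv riemannXi := by
    have : ∀ᶠ s in 𝓝 (1 : ℂ), riemannXi s ∈ Complex.slitPlane :=
      (xi_analytic 1).continuousAt.eventually_mem (Complex.isOpen_slitPlane.mem_nhds hslit)
    filter_upwards [this] with s hs
    rw [((xi_differentiable s).hasDerivAt.clog hs).deriv, logDeriv_apply]
  rw [liCoeff, li_expand _ hfa n hn]
  set G : ℕ → ℝ := fun k => if k = 0 then
    -(Real.eulerMascheroniConstant + Real.log (4 * Real.pi)) / 2 else k.factorial * dcoef k with hG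
  have hGk : ∀ k, iteratedDeriv k (logDeriv Complex.Gammaℝ) 1 = (G k : ℂ) := by
    intro k
    by_cases hk : k = 0
    · subst hk
      simp only [iteratedDeriv_zero, hG, if_true]
      exact logDeriv_gammaR_one
    · rw [iteratedDeriv_gammaR k hk]; simp [hG, hk]
  have hterm : ∀ j ∈ Finset.Icc 1 n, (n.choose j : ℂ) / ((j - 1).factorial : ℂ) *
        iteratedDeriv (j - 1) (deriv (fun s => Complex.log (riemannXi s))) 1 =
      (((n.choose j : ℝ) * (-1) ^ (j - 1) -
        (n.choose j : ℝ) * ((-1 : ℝ) ^ (j - 1) / ((j - 1).factorial : ℝ)) * L (j - 1) +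
        (n.choose j : ℝ) / ((j - 1).factorial : ℝ) * G (j - 1) : ℝ) : ℂ) := by
    intro j _
    rw [hder.iteratedDeriv_eq, iter_logDeriv_xi, auxH_iter_one _ _ (hL (j - 1)), hGk]
    have : ((j - 1).factorial : ℂ) ≠ 0 := by exact_mod_cast Nat.factorial_ne_zero _
    push_cast
    field_simp
    ring
  rw [sum_congr rfl hterm, ← Complex.ofReal_sum]
  congr 1
  rw [sum_add_distrib, sum_sub_distrib, choose_alt n hn]
  have hlast : ∑ j ∈ Finset.Icc 1 n, (n.choose j : ℝ) / ((j - 1).factorial : ℝ) * G (j - 1) =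
      -((n : ℝ) / 2) * (Real.eulerMascheroniConstant + Real.log (4 * Real.pi)) +
      ∑ j ∈ Finset.Icc 2 n, (-1 : ℝ) ^ j * (n.choose j : ℝ) *
          (1 - (2 : ℝ) ^ (-(j : ℤ))) * (∑' m : ℕ, 1 / ((m : ℝ) + 1) ^ j) := by
    rw [← Finset.insert_Icc_add_one_left_eq_Icc hn, sum_insert (by simp)]
    congr 1
    · simp [hG]; ring
    · refine sum_congr rfl fun j hj => ?_
      have hj2 : 2 ≤ j := (Finset.mem_Icc.1 hj).1
      obtain ⟨k, rfl⟩ : ∃ k, j = k + 1 := ⟨j - 1, by omega⟩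
      have hk : k ≠ 0 := by omega
      have hf : (k.factorial : ℝ) ≠ 0 := by exact_mod_cast Nat.factorial_ne_zero _
      rw [mul_assoc _ (1 - (2 : ℝ) ^ (-((k + 1 : ℕ) : ℤ))), ← odd_tsum (k + 1) hj2]
      simp only [hG, Nat.add_sub_cancel, if_neg hk, dcoef]
      field_simp
  rw [hlast]
  ring
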